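/- arXiv:0712.1014 — 7 statements merged into one kernel-verified Lean document; each statement's English description precedes it below -/
import Mathlib

section
/- For every finite simple graph G one has α(G) ≤ β(G), α(G) ≥ λ(G) − α(G), and λ(G) − α(G) ≥ 4(β(G) − α(G)); consequently 4·β(G) ≤ 5·α(G), i.e., β(G)/α(G) ≤ 5/4. -/
open SimpleGraph

/-- A matching of `G`, given as a finite set of edges of `G` that are pairwise non-adjacent. -/
def IsMatchingE {V : Type*} (G : SimpleGraph V) (M : Finset (Sym2 V)) : Prop :=
  ↑M ⊆ G.edgeSet ∧ ∀ e ∈ M, ∀ f ∈ M, e ≠ f → ∀ v : V, ¬(v ∈ e ∧ v ∈ f)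

/-- A vertex is covered by a set of edges if some edge of it is incident to the vertex. -/
def Covers {V : Type*} (M : Finset (Sym2 V)) (v : V) : Prop := ∃ e ∈ M, v ∈ e

/-- `β(G)`: the maximum size of a matching of `G`. -/
noncomputable def gBeta {V : Type*} (G : SimpleGraph V) : ℕ :=
  sSup {n | ∃ M : Finset (Sym2 V), IsMatchingE G M ∧ M.card = n}

/-- `λ(G)`: the maximum of `|H| + |H'|` over pairs `(H, H')` of disjoint matchings of `G`. -/
noncomputable def gLam {V : Type*} (G : SimpleGraph V) : ℕ :=
  sSup {n | ∃ H H' : Finset (Sym2 V), IsMatchingE G H ∧ IsMatchingE G H' ∧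
    Disjoint H H' ∧ H.card + H'.card = n}

/-- `α(G)`: the maximum of `|H|` over pairs `(H, H')` of disjoint matchings of `G`
with `|H| + |H'| = λ(G)`. -/
noncomputable def gAlpha {V : Type*} (G : SimpleGraph V) : ℕ :=
  sSup {n | ∃ H H' : Finset (Sym2 V), IsMatchingE G H ∧ IsMatchingE G H' ∧
    Disjoint H H' ∧ H.card + H'.card = gLam G ∧ H.card = n}

/-- `β₁(G)`: the maximum of `β(G \ F)` over maximum matchings `F` of `G`. -/
noncomputable def gBeta1 {V : Type*} (G : SimpleGraph V) : ℕ :=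
  sSup {n | ∃ F : Finset (Sym2 V), IsMatchingE G F ∧ F.card = gBeta G ∧
    gBeta (G.deleteEdges ↑F) = n}

/-- Membership in `M₂(G)`: `(H, H')` is a pair of disjoint matchings of `G` with
`|H| + |H'| = λ(G)` and `|H| = α(G)`. -/
def InM2 {V : Type*} (G : SimpleGraph V) (H H' : Finset (Sym2 V)) : Prop :=
  IsMatchingE G H ∧ IsMatchingE G H' ∧ Disjoint H H' ∧
  H.card + H'.card = gLam G ∧ H.card = gAlpha G

/-- Membership in `M₂(G, M)`: pairs from `M₂(G)` maximizing `|M ∩ (H ∪ H')|`. -/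
def InM2M {V : Type*} [DecidableEq V] (G : SimpleGraph V) (M H H' : Finset (Sym2 V)) : Prop :=
  InM2 G H H' ∧ ∀ K K' : Finset (Sym2 V), InM2 G K K' →
    (M ∩ (K ∪ K')).card ≤ (M ∩ (H ∪ H')).card

/-- The degree of a vertex `v` in the graph `F`. -/
noncomputable def fdeg {V : Type*} (F : SimpleGraph V) (v : V) : ℕ := (F.neighborSet v).ncard

/-- The spanner: two paths `a₁a₂a₃a₄a₅` and `b₁b₂b₃b₄b₅` joined by the edge `a₃b₃`.
Vertices `0..4` are `a₁..a₅` and `5..9` are `b₁..b₅`. -/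
def Spanner10 : SimpleGraph (Fin 10) :=
  SimpleGraph.fromEdgeSet
    {s(0, 1), s(1, 2), s(2, 3), s(3, 4), s(5, 6), s(6, 7), s(7, 8), s(8, 9), s(2, 7)}

/-- An S-forest: every connected component is isomorphic to the spanner. -/
def IsSForest {V : Type*} (F : SimpleGraph V) : Prop :=
  ∀ c : F.ConnectedComponent, Nonempty ((F.induce c.supp) ≃g Spanner10)

/-- `U(F)`: edges of `F` incident to a vertex of degree 1. -/
def USet {V : Type*} (F : SimpleGraph V) : Set (Sym2 V) :=
  {e | e ∈ F.edgeSet ∧ ∃ v ∈ e, fdeg F v = 1}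

/-- `L(F)`: edges of `F` not in `U(F)` incident to a vertex of degree 2. -/
def LSet {V : Type*} (F : SimpleGraph V) : Set (Sym2 V) :=
  {e | e ∈ F.edgeSet ∧ e ∉ USet F ∧ ∃ v ∈ e, fdeg F v = 2}

/-- `w` is the base of the 1-vertex `u` of `F`: a 3-vertex at `F`-distance 2 from `u`. -/
def IsBase {V : Type*} (F : SimpleGraph V) (u w : V) : Prop :=
  fdeg F w = 3 ∧ F.dist u w = 2

/-- `Δ(G, F)`: edges of `G` joining a 1-vertex of `F` to its base. -/
def DeltaSet {V : Type*} (G F : SimpleGraph V) : Set (Sym2 V) :=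
  {e | e ∈ G.edgeSet ∧ ∃ u w : V, e = s(u, w) ∧ fdeg F u = 1 ∧ IsBase F u w}

/-- `B(G, F) = E(G) \ (U(F) ∪ L(F) ∪ Δ(G, F))`. -/
def BSet {V : Type*} (G F : SimpleGraph V) : Set (Sym2 V) :=
  G.edgeSet \ (USet F ∪ LSet F ∪ DeltaSet G F)

/-- Condition (a): no 1-vertex of `F` is incident to an edge from `B(G, F)`. -/
def CondA {V : Type*} (G F : SimpleGraph V) : Prop :=
  ∀ v : V, fdeg F v = 1 → ∀ e ∈ BSet G F, v ∉ e

/-- Condition (b): if a 1-vertex `u` of `F` is incident to an edge from `Δ(G, F)`, then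
the 2-vertex of `F` adjacent to `u` in `F` is not incident to any edge from `B(G, F)`. -/
def CondB {V : Type*} (G F : SimpleGraph V) : Prop :=
  ∀ u v : V, fdeg F u = 1 → (∃ e ∈ DeltaSet G F, u ∈ e) →
    F.Adj u v → fdeg F v = 2 → ∀ e ∈ BSet G F, v ∉ e

/-- Condition (c): for every `L(F)`-`B(G, F)` alternating even closed trail of `G`
containing an edge joining two 2-vertices of `F`, the graph formed by its edges belonging
to `B(G, F)` is not bipartite (2-colorable). -/
def CondC {V : Type*} (G F : SimpleGraph V) : Prop :=
  ∀ (n : ℕ) (e : ℕ → Sym2 V),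
    1 ≤ n →
    (∀ i j, i < 2 * n → j < 2 * n → e i = e j → i = j) →
    (∀ i, i < 2 * n → e i ∈ G.edgeSet) →
    (∀ i, i + 1 < 2 * n → ∃ v : V, v ∈ e i ∧ v ∈ e (i + 1)) →
    (∃ v : V, v ∈ e (2 * n - 1) ∧ v ∈ e 0) →
    (∀ i, i < 2 * n → (i % 2 = 0 → e i ∈ LSet F) ∧ (i % 2 = 1 → e i ∈ BSet G F)) →
    (∃ i, i < 2 * n ∧ ∀ v ∈ e i, fdeg F v = 2) →
    ¬ (SimpleGraph.fromEdgeSet {f | ∃ i, i < 2 * n ∧ f = e i ∧ f ∈ BSet G F}).Colorable 2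

/-- Edges of a matching sharing a vertex coincide. -/
lemma IsMatchingE.uniq {V : Type*} {G : SimpleGraph V} {M : Finset (Sym2 V)}
    (h : IsMatchingE G M) {e f : Sym2 V} (he : e ∈ M) (hf : f ∈ M) {v : V}
    (hve : v ∈ e) (hvf : v ∈ f) : e = f := by
  by_contra hne
  exact h.2 e he f hf hne v ⟨hve, hvf⟩

lemma IsMatchingE.uniq2 {V : Type*} {G : SimpleGraph V} {M : Finset (Sym2 V)}
    (h : IsMatchingE G M) {a b c : V} (he : s(a, b) ∈ M) (hf : s(a, c) ∈ M) : b = c := by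
  have := h.uniq he hf (v := a) (by simp) (by simp)
  exact Sym2.congr_right.1 this

lemma IsMatchingE.ne {V : Type*} {G : SimpleGraph V} {M : Finset (Sym2 V)}
    (h : IsMatchingE G M) {a b : V} (he : s(a, b) ∈ M) : a ≠ b := by
  have : G.Adj a b := by
    have := h.1 (Finset.mem_coe.2 he)
    simpa using this
  exact this.ne

/-- Replace the edge at `b` (if any) by `ab`. -/
def swapE {V : Type*} [DecidableEq V] (H : Finset (Sym2 V)) (a b : V) : Finset (Sym2 V) :=
  insert s(a, b) (H.filter (fun g => b ∉ g))

lemma swapE_matching {V : Type*} [DecidableEq V] {G : SimpleGraph V} {H : Finset (Sym2 V)}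
    (h : IsMatchingE G H) {a b : V} (ha : ¬ Covers H a) (hab : s(a, b) ∈ G.edgeSet) :
    IsMatchingE G (swapE H a b) := by
  have key : ∀ g ∈ H, b ∉ g → ∀ v, v ∈ g → v ∈ s(a, b) → False := by
    intro g hg hb v hv hv2
    rcases Sym2.mem_iff.1 hv2 with rfl | rfl
    · exact ha ⟨g, hg, hv⟩
    · exact hb hv
  constructor
  · intro e he
    simp only [swapE, Finset.coe_insert, Set.mem_insert_iff, Finset.mem_coe,
      Finset.mem_filter] at he
    rcases he with rfl | he
    · exact hab
    · exact h.1 he.1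
  · intro e he f hf hne v hv
    simp only [swapE, Finset.mem_insert, Finset.mem_filter] at he hf
    rcases he with rfl | he <;> rcases hf with rfl | hf
    · exact hne rfl
    · exact key f hf.1 hf.2 v hv.2 hv.1
    · exact key e he.1 he.2 v hv.1 hv.2
    · exact h.2 e he.1 f hf.1 hne v hv

lemma swapE_card {V : Type*} [DecidableEq V] {G : SimpleGraph V} {H : Finset (Sym2 V)}
    (h : IsMatchingE G H) {a b : V} (ha : ¬ Covers H a) :
    H.card ≤ (swapE H a b).card := by
  have hn : s(a, b) ∉ H := fun hh => ha ⟨_, hh, by simp⟩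
  have h1 : (H.filter (fun g => b ∈ g)).card ≤ 1 := by
    rw [Finset.card_le_one]
    intro e he f hf
    simp only [Finset.mem_filter] at he hf
    exact h.uniq he.1 hf.1 he.2 hf.2
  have h2 := Finset.card_filter_add_card_filter_not (s := H) (fun g => b ∈ g)
  have h3 : (swapE H a b).card = (H.filter (fun g => b ∉ g)).card + 1 := by
    unfold swapE
    rw [Finset.card_insert_of_notMem]
    simp [hn]
  omega

/-- The intersection with `M` grows. -/
lemma swapE_inter {V : Type*} [DecidableEq V] {G : SimpleGraph V} {M H H' : Finset (Sym2 V)}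
    (hM : IsMatchingE G M) {a b : V} (hab : s(a, b) ∈ M) (h1 : s(a, b) ∉ H)
    (h2 : s(a, b) ∉ H') :
    (M ∩ (H ∪ H')).card < (M ∩ (swapE H a b ∪ H')).card := by
  apply Finset.card_lt_card
  rw [Finset.ssubset_iff_of_subset]
  · refine ⟨s(a, b), ?_, ?_⟩
    · simp [swapE, hab]
    · simp [h1, h2]
  · intro e he
    simp only [Finset.mem_inter, Finset.mem_union, swapE, Finset.mem_insert,
      Finset.mem_filter] at he ⊢
    refine ⟨he.1, ?_⟩
    rcases he.2 with h | h
    · by_cases hb : b ∈ e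
      · left; left
        exact hM.uniq he.1 hab hb (by simp)
      · left; right; exact ⟨h, hb⟩
    · right; exact h

/-- A pair which is lexicographically optimal. -/
structure OptPair {V : Type*} [DecidableEq V] (G : SimpleGraph V) (M H H' : Finset (Sym2 V)) :
    Prop where
  m1 : IsMatchingE G H
  m2 : IsMatchingE G H'
  dj : Disjoint H H'
  s1 : ∀ K K' : Finset (Sym2 V), IsMatchingE G K → IsMatchingE G K' → Disjoint K K' →
    K.card + K'.card ≤ H.card + H'.card
  s2 : ∀ K K' : Finset (Sym2 V), IsMatchingE G K → IsMatchingE G K' → Disjoint K K' →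
    K.card + K'.card = H.card + H'.card → K.card ≤ H.card
  s3 : ∀ K K' : Finset (Sym2 V), IsMatchingE G K → IsMatchingE G K' → Disjoint K K' →
    K.card + K'.card = H.card + H'.card → K.card = H.card →
    (M ∩ (K ∪ K')).card ≤ (M ∩ (H ∪ H')).card

/-- An `M`-edge at an `H`-uncovered vertex is in `H'`. -/
lemma OptPair.mem_snd {V : Type*} [DecidableEq V] {G : SimpleGraph V}
    {M H H' : Finset (Sym2 V)} (o : OptPair G M H H') (hM : IsMatchingE G M) {a b : V}
    (hab : s(a, b) ∈ M) (ha : ¬ Covers H a) : s(a, b) ∈ H' := by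
  by_contra hn
  have hG := hM.1 (Finset.mem_coe.2 hab)
  have hm := swapE_matching o.m1 ha hG
  have hc := swapE_card o.m1 (b := b) ha
  have hd : Disjoint (swapE H a b) H' := by
    rw [swapE, Finset.disjoint_insert_left]
    exact ⟨hn, Finset.disjoint_of_subset_left (Finset.filter_subset _ _) o.dj⟩
  have t1 := o.s1 _ _ hm o.m2 hd
  have t3 := o.s3 _ _ hm o.m2 hd (by omega) (by omega)
  have := swapE_inter (H' := H') hM hab (H := H) (fun hh => ha ⟨_, hh, by simp⟩) hn
  omega

/-- An `M`-edge at an `H'`-uncovered vertex is in `H`. -/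
lemma OptPair.mem_fst {V : Type*} [DecidableEq V] {G : SimpleGraph V}
    {M H H' : Finset (Sym2 V)} (o : OptPair G M H H') (hM : IsMatchingE G M) {a b : V}
    (hab : s(a, b) ∈ M) (ha : ¬ Covers H' a) : s(a, b) ∈ H := by
  by_contra hn
  have hG := hM.1 (Finset.mem_coe.2 hab)
  have hm := swapE_matching o.m2 ha hG
  have hc := swapE_card o.m2 (b := b) ha
  have hd : Disjoint H (swapE H' a b) := by
    rw [swapE, Finset.disjoint_insert_right]
    exact ⟨hn, Finset.disjoint_of_subset_right (Finset.filter_subset _ _) o.dj⟩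
  have t1 := o.s1 _ _ o.m1 hm hd
  have t3 := o.s3 _ _ o.m1 hm hd (by omega) rfl
  have := swapE_inter (H := H') (H' := H) hM hab (fun hh => ha ⟨_, hh, by simp⟩) hn
  rw [Finset.union_comm H, Finset.union_comm H] at t3
  omega

lemma matching_exch {V : Type*} [DecidableEq V] {G : SimpleGraph V}
    {H H' X Y : Finset (Sym2 V)} (h : IsMatchingE G H) (h' : IsMatchingE G H') (hY : Y ⊆ H')
    (c : ∀ e ∈ H, e ∉ X → ∀ f ∈ Y, ∀ v, v ∈ e → v ∈ f → False) :
    IsMatchingE G ((H \ X) ∪ Y) := by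
  constructor
  · intro e he
    simp only [Finset.coe_union, Finset.coe_sdiff, Set.mem_union, Set.mem_sdiff,
      Finset.mem_coe] at he
    rcases he with he | he
    · exact h.1 he.1
    · exact h'.1 (hY he)
  · intro e he f hf hne v hv
    simp only [Finset.mem_union, Finset.mem_sdiff] at he hf
    rcases he with he | he <;> rcases hf with hf | hf
    · exact h.2 e he.1 f hf.1 hne v hv
    · exact c e he.1 he.2 f hf v hv.1 hv.2
    · exact c f hf.1 hf.2 e he v hv.2 hv.1
    · exact h'.2 e (hY he) f (hY hf) hne v hv

/-- No profitable exchange of a set of edges between `H` and `H'`. -/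
lemma OptPair.exch {V : Type*} [DecidableEq V] {G : SimpleGraph V}
    {M H H' X Y : Finset (Sym2 V)} (o : OptPair G M H H') (hX : X ⊆ H) (hY : Y ⊆ H')
    (c : ∀ e ∈ H, e ∉ X → ∀ f ∈ Y, ∀ v, v ∈ e → v ∈ f → False)
    (c' : ∀ e ∈ H', e ∉ Y → ∀ f ∈ X, ∀ v, v ∈ e → v ∈ f → False) : Y.card ≤ X.card := by
  have k1 := matching_exch o.m1 o.m2 hY c
  have k2 := matching_exch o.m2 o.m1 hX c'
  have d := Finset.disjoint_left.1 o.dj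
  have hd : Disjoint ((H \ X) ∪ Y) ((H' \ Y) ∪ X) := by
    rw [Finset.disjoint_left]
    intro e he he'
    simp only [Finset.mem_union, Finset.mem_sdiff] at he he'
    rcases he with he | he <;> rcases he' with he' | he'
    · exact d he.1 he'.1
    · exact he.2 he'
    · exact he'.2 he
    · exact d (hX he') (hY he)
  have n1 : ((H \ X) ∪ Y).card = (H \ X).card + Y.card := by
    apply Finset.card_union_of_disjoint
    rw [Finset.disjoint_left]
    intro e he he'
    exact d (Finset.mem_sdiff.1 he).1 (hY he')
  have n2 : ((H' \ Y) ∪ X).card = (H' \ Y).card + X.card := by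
    apply Finset.card_union_of_disjoint
    rw [Finset.disjoint_left]
    intro e he he'
    exact d (hX he') (Finset.mem_sdiff.1 he).1
  have n3 := Finset.card_sdiff_add_card_eq_card hX
  have n4 := Finset.card_sdiff_add_card_eq_card hY
  have := o.s2 _ _ k1 k2 hd (by omega)
  omega

/-- The neighbour of an `H`-uncovered `H'`-covered vertex is `H`-covered. -/
lemma OptPair.next {V : Type*} [DecidableEq V] {G : SimpleGraph V}
    {M H H' : Finset (Sym2 V)} (o : OptPair G M H H') {a b : V}
    (hab : s(a, b) ∈ H') (ha : ¬ Covers H a) : ∃ c, s(b, c) ∈ H := by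
  by_contra hn
  push Not at hn
  have := o.exch (X := ∅) (Y := {s(a, b)}) (by simp) (by simpa using hab)
    (by
      intro e he _ f hf v hv hv'
      rw [Finset.mem_singleton.1 hf] at hv'
      rcases Sym2.mem_iff.1 hv' with rfl | rfl
      · exact ha ⟨e, he, hv⟩
      · obtain ⟨c, rfl⟩ := hv
        exact hn c he) (by simp)
  simp at this

/-- Excluded path of length three. -/
lemma OptPair.path3 {V : Type*} [DecidableEq V] {G : SimpleGraph V}
    {M H H' : Finset (Sym2 V)} (o : OptPair G M H H') {a b c d : V}
    (hab : s(a, b) ∈ H') (hbc : s(b, c) ∈ H) (hcd : s(c, d) ∈ H') (hac : s(a, b) ≠ s(c, d))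
    (ha : ¬ Covers H a) (hd : ¬ Covers H d) : False := by
  have := o.exch (X := {s(b, c)}) (Y := {s(a, b), s(c, d)})
    (by simpa using hbc) (by intro e; simp; rintro (rfl | rfl) <;> assumption)
    (by
      intro e he hX f hf v hv hv'
      rw [Finset.mem_singleton] at hX
      simp only [Finset.mem_insert, Finset.mem_singleton] at hf
      rcases hf with rfl | rfl <;> rcases Sym2.mem_iff.1 hv' with rfl | rfl
      · exact ha ⟨e, he, hv⟩
      · exact hX (o.m1.uniq he hbc hv (by simp))
      · exact hX (o.m1.uniq he hbc hv (by simp))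
      · exact hd ⟨e, he, hv⟩)
    (by
      intro e he hY f hf v hv hv'
      rw [Finset.mem_singleton.1 hf] at hv'
      apply hY
      simp only [Finset.mem_insert, Finset.mem_singleton]
      rcases Sym2.mem_iff.1 hv' with rfl | rfl
      · exact Or.inl (o.m2.uniq he hab hv (by simp))
      · exact Or.inr (o.m2.uniq he hcd hv (by simp)))
  rw [Finset.card_pair hac] at this
  simp at this

/-- Excluded path of length five. -/
lemma OptPair.path5 {V : Type*} [DecidableEq V] {G : SimpleGraph V}
    {M H H' : Finset (Sym2 V)} (o : OptPair G M H H') {a b c c' b' a' : V}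
    (hab : s(a, b) ∈ H') (hbc : s(b, c) ∈ H) (hcc : s(c, c') ∈ H')
    (hbc' : s(b', c') ∈ H) (hab' : s(a', b') ∈ H')
    (n1 : s(a, b) ≠ s(c, c')) (n2 : s(a, b) ≠ s(a', b')) (n3 : s(c, c') ≠ s(a', b'))
    (ha : ¬ Covers H a) (ha' : ¬ Covers H a') : False := by
  have := o.exch (X := {s(b, c), s(b', c')}) (Y := {s(a, b), s(c, c'), s(a', b')})
    (by intro e; simp; rintro (rfl | rfl) <;> assumption)
    (by intro e; simp; rintro (rfl | rfl | rfl) <;> assumption)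
    (by
      intro e he hX f hf v hv hv'
      simp only [Finset.mem_insert, Finset.mem_singleton, not_or] at hX
      simp only [Finset.mem_insert, Finset.mem_singleton] at hf
      rcases hf with rfl | rfl | rfl <;> rcases Sym2.mem_iff.1 hv' with rfl | rfl
      · exact ha ⟨e, he, hv⟩
      · exact hX.1 (o.m1.uniq he hbc hv (by simp))
      · exact hX.1 (o.m1.uniq he hbc hv (by simp))
      · exact hX.2 (o.m1.uniq he hbc' hv (by simp))
      · exact ha' ⟨e, he, hv⟩
      · exact hX.2 (o.m1.uniq he hbc' hv (by simp)))
    (by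
      intro e he hY f hf v hv hv'
      apply hY
      simp only [Finset.mem_insert, Finset.mem_singleton] at hf ⊢
      rcases hf with rfl | rfl <;> rcases Sym2.mem_iff.1 hv' with rfl | rfl
      · exact Or.inl (o.m2.uniq he hab hv (by simp))
      · exact Or.inr (Or.inl (o.m2.uniq he hcc hv (by simp)))
      · exact Or.inr (Or.inr (o.m2.uniq he hab' hv (by simp)))
      · exact Or.inr (Or.inl (o.m2.uniq he hcc hv (by simp))))
  have h3 : ({s(a, b), s(c, c'), s(a', b')} : Finset (Sym2 V)).card = 3 := by
    rw [Finset.card_eq_three]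
    exact ⟨_, _, _, n1, n2, n3, rfl⟩
  have h2 := Finset.card_le_two (a := s(b, c)) (b := s(b', c'))
  omega

/-- The set of covered vertices. -/
def covE {V : Type*} [DecidableEq V] (M : Finset (Sym2 V)) : Finset V :=
  M.biUnion Sym2.toFinset

lemma mem_covE {V : Type*} [DecidableEq V] {M : Finset (Sym2 V)} {v : V} :
    v ∈ covE M ↔ Covers M v := by
  simp [covE, Covers]

lemma card_covE {V : Type*} [DecidableEq V] {G : SimpleGraph V} {M : Finset (Sym2 V)}
    (h : IsMatchingE G M) : (covE M).card = 2 * M.card := by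
  unfold covE
  rw [Finset.card_biUnion, Finset.sum_const_nat (m := 2), mul_comm]
  · intro e he
    exact Sym2.card_toFinset_of_not_isDiag e (G.not_isDiag_of_mem_edgeSet (h.1 he))
  · intro e he f hf hne
    rw [Function.onFun, Finset.disjoint_left]
    intro v hv hv'
    exact h.2 e he f hf hne v ⟨Sym2.mem_toFinset.1 hv, Sym2.mem_toFinset.1 hv'⟩

/-- The main counting inequality. -/
lemma OptPair.main {V : Type*} [DecidableEq V] {G : SimpleGraph V}
    {M H H' : Finset (Sym2 V)} (o : OptPair G M H H') (hM : IsMatchingE G M) :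
    4 * M.card ≤ 4 * H.card + H'.card := by
  classical
  set A := covE M \ covE H with hA
  set B := covE H \ covE M with hB
  have cM := card_covE hM
  have cH := card_covE o.m1
  have hAB : A.card + (covE H).card = B.card + (covE M).card := by
    have e1 := Finset.card_sdiff_add_card (covE M) (covE H)
    have e2 := Finset.card_sdiff_add_card (covE H) (covE M)
    rw [Finset.union_comm] at e2
    rw [hA, hB]; omega
  have hun : ∀ v ∈ A, ¬ Covers H v := by
    intro v hv hc
    exact (Finset.mem_sdiff.1 hv).2 (mem_covE.2 hc)
  have ex : ∀ v : V, ∃ b c : V, v ∈ A → s(v, b) ∈ M ∧ s(v, b) ∈ H' ∧ s(b, c) ∈ H := by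
    intro v
    by_cases hv : v ∈ A
    · obtain ⟨e, he, b, rfl⟩ := mem_covE.1 (Finset.mem_sdiff.1 hv).1
      have h1 := o.mem_snd hM he (hun v hv)
      obtain ⟨c, hc⟩ := o.next h1 (hun v hv)
      exact ⟨b, c, fun _ => ⟨he, h1, hc⟩⟩
    · exact ⟨v, v, fun h => absurd h hv⟩
  choose b c hbc using ex
  -- injectivity facts
  have bH : ∀ v ∈ A, Covers H (b v) := fun v hv => ⟨_, (hbc v hv).2.2, by simp⟩
  have cHc : ∀ v ∈ A, Covers H (c v) := fun v hv => ⟨_, (hbc v hv).2.2, by simp⟩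
  have cinj : ∀ v ∈ A, ∀ w ∈ A, c v = c w → v = w := by
    intro v hv w hw h
    have h1 := (hbc v hv).2.2
    have h2 := (hbc w hw).2.2
    rw [← h, Sym2.eq_swap] at h2
    rw [Sym2.eq_swap] at h1
    have h3 := o.m1.uniq2 h1 h2
    have h4 := (hbc v hv).2.1
    have h5 := (hbc w hw).2.1
    rw [← h3, Sym2.eq_swap] at h5
    rw [Sym2.eq_swap] at h4
    exact o.m2.uniq2 h4 h5
  have einj : ∀ v ∈ A, ∀ w ∈ A, s(v, b v) = s(w, b w) → v = w := by
    intro v hv w hw h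
    rcases Sym2.eq_iff.1 h with h | h
    · exact h.1
    · exact absurd (h.1 ▸ bH w hw) (hun v hv)
  set A' := A.filter (fun v => Covers M (c v)) with hA'
  have hAA : A.card ≤ A'.card + B.card := by
    have e1 : A'.card + (A.filter (fun v => ¬ Covers M (c v))).card = A.card := by
      rw [hA']
      convert Finset.card_filter_add_card_filter_not (s := A) (fun v => Covers M (c v))
    have e2 : (A.filter (fun v => ¬ Covers M (c v))).card ≤ B.card := by
      apply Finset.card_le_card_of_injOn c
      · intro v hv
        have hv := Finset.mem_filter.1 (Finset.mem_coe.1 hv)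
        simp only [hB, Finset.coe_sdiff, Set.mem_sdiff, Finset.mem_coe, mem_covE]
        exact ⟨cHc v hv.1, hv.2⟩
      · intro v hv w hw h
        exact cinj v (Finset.mem_filter.1 hv).1 w (Finset.mem_filter.1 hw).1 h
    omega
  have hsub : A' ⊆ A := Finset.filter_subset _ _
  have ex2 : ∀ v : V, ∃ d : V, v ∈ A' → s(c v, d) ∈ H' := by
    intro v
    by_cases hv : v ∈ A'
    · have hvA := hsub hv
      obtain ⟨hm, hh', hh⟩ := hbc v hvA
      have : Covers H' (c v) := by
        by_contra hn
        obtain ⟨e, he, x, rfl⟩ := (Finset.mem_filter.1 hv).2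
        have h1 := o.mem_fst hM he hn
        rw [Sym2.eq_swap] at hh hm
        have h2 : b v = x := o.m1.uniq2 hh h1
        subst h2
        rw [Sym2.eq_swap] at he
        have h3 := hM.uniq2 hm he
        exact hun v hvA (h3 ▸ cHc v hvA)
      obtain ⟨e, he, x, rfl⟩ := this
      exact ⟨x, fun _ => he⟩
    · exact ⟨v, fun h => absurd h hv⟩
  choose d hd using ex2
  have enf : ∀ v ∈ A, ∀ x, s(v, b v) ≠ s(c v, x) := by
    intro v hv x h
    rcases Sym2.eq_iff.1 h with h | h
    · exact hun v hv (h.1 ▸ cHc v hv)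
    · exact o.m1.ne (hbc v hv).2.2 h.2
  have enf2 : ∀ w ∈ A, ∀ v ∈ A', s(w, b w) ≠ s(c v, d v) := by
    intro w hw v hv h
    have hvA := hsub hv
    rcases Sym2.eq_iff.1 h with h1 | h1
    · exact hun w hw (h1.1 ▸ cHc v hvA)
    · exact o.path3 (hbc v hvA).2.1 (hbc v hvA).2.2 (hd v hv) (enf v hvA _) (hun v hvA)
        (h1.1 ▸ hun w hw)
  have finj : ∀ v ∈ A', ∀ w ∈ A', s(c v, d v) = s(c w, d w) → v = w := by
    intro v hv w hw h
    by_contra hne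
    have hvA := hsub hv
    have hwA := hsub hw
    rcases Sym2.eq_iff.1 h with h1 | h1
    · exact hne (cinj v hvA w hwA h1.1)
    · refine o.path5 (hbc v hvA).2.1 (hbc v hvA).2.2 (hd v hv)
        (c' := d v) (b' := b w) (a' := w) ?_ (hbc w hwA).2.1 (enf v hvA _) ?_ ?_
        (hun v hvA) (hun w hwA)
      · rw [h1.2]; exact (hbc w hwA).2.2
      · exact fun hh => hne (einj v hvA w hwA hh)
      · exact (enf2 w hwA v hv).symm
  have hcount : A.card + A'.card ≤ H'.card := by
    rw [← Finset.card_image_of_injOn (s := A) (f := fun v => s(v, b v))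
        (fun v hv w hw h => einj v hv w hw h),
      ← Finset.card_image_of_injOn (s := A') (f := fun v => s(c v, d v))
        (fun v hv w hw h => finj v hv w hw h), ← Finset.card_union_of_disjoint]
    · apply Finset.card_le_card
      intro e he
      simp only [Finset.mem_union, Finset.mem_image] at he
      rcases he with ⟨v, hv, rfl⟩ | ⟨v, hv, rfl⟩
      · exact (hbc v hv).2.1
      · exact hd v hv
    · rw [Finset.disjoint_left]
      intro e he he'
      simp only [Finset.mem_image] at he he'
      obtain ⟨w, hw, rfl⟩ := he
      obtain ⟨v, hv, h⟩ := he'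
      exact enf2 w hw v hv h.symm
  omega

lemma empty_matching {V : Type*} (G : SimpleGraph V) : IsMatchingE G ∅ := by
  constructor <;> simp

/-- For every finite simple graph `G`: `α(G) ≤ β(G)`,
`α(G) ≥ λ(G) − α(G)`, `λ(G) − α(G) ≥ 4(β(G) − α(G))`, hence `4β(G) ≤ 5α(G)`. -/
theorem stmt0 {V : Type*} [Fintype V] [DecidableEq V] (G : SimpleGraph V) :
    gAlpha G ≤ gBeta G ∧
    gLam G - gAlpha G ≤ gAlpha G ∧
    4 * (gBeta G - gAlpha G) ≤ gLam G - gAlpha G ∧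
    4 * gBeta G ≤ 5 * gAlpha G := by
  classical
  have bd : ∀ M : Finset (Sym2 V), M.card ≤ Fintype.card (Sym2 V) := fun M => M.card_le_univ
  have bB : BddAbove {n | ∃ M : Finset (Sym2 V), IsMatchingE G M ∧ M.card = n} :=
    ⟨Fintype.card (Sym2 V), by rintro n ⟨M, _, rfl⟩; exact bd M⟩
  have bL : BddAbove {n | ∃ H H' : Finset (Sym2 V), IsMatchingE G H ∧ IsMatchingE G H' ∧
      Disjoint H H' ∧ H.card + H'.card = n} :=
    ⟨Fintype.card (Sym2 V) + Fintype.card (Sym2 V), by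
      rintro n ⟨M, M', _, _, _, rfl⟩; exact add_le_add (bd M) (bd M')⟩
  have bA : BddAbove {n | ∃ H H' : Finset (Sym2 V), IsMatchingE G H ∧ IsMatchingE G H' ∧
      Disjoint H H' ∧ H.card + H'.card = gLam G ∧ H.card = n} :=
    ⟨Fintype.card (Sym2 V), by rintro n ⟨M, _, _, _, _, _, rfl⟩; exact bd M⟩
  obtain ⟨M, hM, hMc⟩ : ∃ M : Finset (Sym2 V), IsMatchingE G M ∧ M.card = gBeta G :=
    Nat.sSup_mem (s := {n | ∃ M : Finset (Sym2 V), IsMatchingE G M ∧ M.card = n})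
      ⟨0, ∅, empty_matching G, rfl⟩ bB
  obtain ⟨L, L', hL, hL', hLd, hLc⟩ : ∃ H H' : Finset (Sym2 V), IsMatchingE G H ∧
      IsMatchingE G H' ∧ Disjoint H H' ∧ H.card + H'.card = gLam G :=
    Nat.sSup_mem (s := {n | ∃ H H' : Finset (Sym2 V), IsMatchingE G H ∧ IsMatchingE G H' ∧
      Disjoint H H' ∧ H.card + H'.card = n}) ⟨0, ∅, ∅, empty_matching G, empty_matching G, by simp, rfl⟩ bL
  obtain ⟨P, P', hP, hP', hPd, hPl, hPc⟩ : ∃ H H' : Finset (Sym2 V), IsMatchingE G H ∧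
      IsMatchingE G H' ∧ Disjoint H H' ∧ H.card + H'.card = gLam G ∧ H.card = gAlpha G :=
    Nat.sSup_mem (s := {n | ∃ H H' : Finset (Sym2 V), IsMatchingE G H ∧ IsMatchingE G H' ∧
      Disjoint H H' ∧ H.card + H'.card = gLam G ∧ H.card = n}) ⟨L.card, L, L', hL, hL', hLd, hLc, rfl⟩ bA
  obtain ⟨⟨H, H'⟩, hHm, hmax⟩ := Finset.exists_max_image
    (Finset.univ.filter (fun p : Finset (Sym2 V) × Finset (Sym2 V) => InM2 G p.1 p.2))
    (fun p => (M ∩ (p.1 ∪ p.2)).card) ⟨(P, P'), Finset.mem_filter.2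
      ⟨Finset.mem_univ _, hP, hP', hPd, hPl, hPc⟩⟩
  obtain ⟨h1, h2, h3, h4, h5⟩ := (Finset.mem_filter.1 hHm).2
  dsimp only at h1 h2 h3 h4 h5
  have o : OptPair G M H H' :=
    { m1 := h1
      m2 := h2
      dj := h3
      s1 := fun K K' k k' kd => h4 ▸ le_csSup bL ⟨K, K', k, k', kd, rfl⟩
      s2 := fun K K' k k' kd kc => h5 ▸ le_csSup bA ⟨K, K', k, k', kd, kc.trans h4, rfl⟩
      s3 := fun K K' k k' kd kc kh => hmax (K, K') (Finset.mem_filter.2 ⟨Finset.mem_univ _,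
        k, k', kd, kc.trans h4, kh.trans h5⟩) }
  have r := o.main hM
  have r1 : H.card ≤ gBeta G := le_csSup bB ⟨H, h1, rfl⟩
  have r2 : H'.card ≤ H.card := o.s2 H' H h2 h1 h3.symm (by omega)
  refine ⟨?_, ?_, ?_, ?_⟩ <;> omega
end

section
/- Let G be a finite simple graph every connected component of which is a path or a cycle of even length (equivalently, G is bipartite and has maximum degree at most 2). Then for every pair (H, H') ∈ M₂(G) one has H ∪ H' = E(G). -/
open SimpleGraph

open Classical in
theorem aux_perm {V : Type*} [Fintype V] (G : SimpleGraph V) (hdeg : ∀ v : V, fdeg G v ≤ 2) :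
    ∃ σ : Equiv.Perm V, ∀ v, G.Adj v (σ v) ∨ (σ v = v ∧ fdeg G v < 2) := by
  let M : Matrix V V ℝ := fun v w =>
    (if G.Adj v w then 1/2 else 0) + (if v = w then (2 - (fdeg G v : ℝ))/2 else 0)
  have hd : ∀ v, (fdeg G v : ℝ) = ∑ w, if G.Adj v w then (1:ℝ) else 0 := by
    intro v
    rw [Finset.sum_boole]
    congr 1
    unfold fdeg
    rw [← Set.ncard_coe_finset]
    congr 1
    ext w; simp
  have hrow : ∀ v, ∑ w, M v w = 1 := by
    intro v
    have h1 : ∑ w, (if G.Adj v w then (1/2:ℝ) else 0) = (fdeg G v : ℝ) / 2 := by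
      rw [hd, Finset.sum_div]
      refine Finset.sum_congr rfl fun w _ => ?_
      split_ifs <;> simp
    simp only [M]
    rw [Finset.sum_add_distrib, h1, Finset.sum_ite_eq]
    simp only [Finset.mem_univ, if_true]
    ring
  have hsymm : ∀ v w, M v w = M w v := by
    intro v w
    simp only [M, G.adj_comm v w]
    by_cases h : v = w
    · subst h; rfl
    · simp [h, Ne.symm h]
  have hM : M ∈ doublyStochastic ℝ V := by
    rw [mem_doublyStochastic_iff_sum]
    refine ⟨fun v w => ?_, hrow, fun w => ?_⟩
    · have : (fdeg G v : ℝ) ≤ 2 := by exact_mod_cast hdeg v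
      simp only [M]
      apply add_nonneg <;> split_ifs <;> linarith
    · rw [← hrow w]
      exact Finset.sum_congr rfl fun v _ => hsymm v w
  obtain ⟨w, hw0, hw1, hwM⟩ := exists_eq_sum_perm_of_mem_doublyStochastic hM
  obtain ⟨σ, hσ⟩ : ∃ σ, 0 < w σ := by
    by_contra hcon
    push Not at hcon
    have : ∑ σ, w σ ≤ 0 := Finset.sum_nonpos fun σ _ => hcon σ
    linarith
  refine ⟨σ, fun v => ?_⟩
  have hpos : 0 < M v (σ v) := by
    rw [← hwM, Matrix.sum_apply]
    refine Finset.sum_pos' (fun τ _ => ?_) ⟨σ, Finset.mem_univ _, ?_⟩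
    · simp only [Matrix.smul_apply, Equiv.Perm.permMatrix, PEquiv.toMatrix_apply, smul_eq_mul]
      apply mul_nonneg (hw0 τ)
      split_ifs <;> norm_num
    · simpa [Equiv.Perm.permMatrix, PEquiv.toMatrix_apply] using hσ
  by_cases ha : G.Adj v (σ v)
  · exact Or.inl ha
  · right
    simp only [M, ha, if_false, zero_add] at hpos
    split_ifs at hpos with h
    · refine ⟨h.symm, ?_⟩
      have : (fdeg G v : ℝ) < 2 := by linarith
      exact_mod_cast this
    · exact absurd hpos (lt_irrefl _)

open Classical in
theorem aux_two {V : Type*} [Fintype V] (G : SimpleGraph V)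
    (hbip : G.Colorable 2) (hdeg : ∀ v : V, fdeg G v ≤ 2) :
    ∃ H H' : Finset (Sym2 V), IsMatchingE G H ∧ IsMatchingE G H' ∧
    Disjoint H H' ∧ ∀ e ∈ G.edgeSet, e ∈ H ∨ e ∈ H' := by
  obtain ⟨c⟩ := hbip
  obtain ⟨σ, hσ⟩ := aux_perm G hdeg
  have hcol : ∀ {a b}, G.Adj a b → (c a = 0 ↔ c b = 1) := by
    intro a b hab
    have := c.valid hab
    revert this
    generalize c a = x
    generalize c b = y
    revert x y
    decide
  let H : Finset (Sym2 V) := G.edgeFinset.filter fun e => ∃ v, c v = 0 ∧ e = s(v, σ v)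
  have hcov : ∀ v, fdeg G v = 2 → ∃ x, G.Adj v x ∧ s(v, x) ∈ H := by
    intro v hv
    by_cases h0 : c v = 0
    · rcases hσ v with h | h
      · exact ⟨σ v, h, by simp only [H, Finset.mem_filter, SimpleGraph.mem_edgeFinset]; exact ⟨h, v, h0, rfl⟩⟩
      · omega
    · have h1 : c v = 1 := by
        revert h0; generalize c v = x; revert x; decide
      rcases hσ (σ.symm v) with h | h
      · rw [Equiv.apply_symm_apply] at h
        refine ⟨σ.symm v, h.symm, ?_⟩
        simp only [H, Finset.mem_filter, SimpleGraph.mem_edgeFinset]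
        refine ⟨h.symm, σ.symm v, (hcol h).2 h1, ?_⟩
        rw [Equiv.apply_symm_apply, Sym2.eq_swap]
      · rw [Equiv.apply_symm_apply] at h
        rw [← h.1] at h
        omega
  refine ⟨H, G.edgeFinset \ H, ⟨?_, ?_⟩, ⟨?_, ?_⟩, Finset.disjoint_sdiff, ?_⟩
  · intro e he
    simp only [H, Finset.coe_filter, Set.mem_ofPred_eq, SimpleGraph.mem_edgeFinset] at he
    exact he.1
  · intro e he f hf hne v hv
    simp only [H, Finset.mem_filter, SimpleGraph.mem_edgeFinset] at he hf
    obtain ⟨he, a, ha, rfl⟩ := he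
    obtain ⟨hf, b, hb, rfl⟩ := hf
    rw [SimpleGraph.mem_edgeSet] at he hf
    have ha' := (hcol he).1 ha
    have hb' := (hcol hf).1 hb
    have hab : a ≠ b := fun h => hne (by rw [h])
    have h01 : (0 : Fin 2) ≠ 1 := by decide
    simp only [Sym2.mem_iff] at hv
    obtain ⟨rfl | h1, h2 | h2⟩ := hv
    · exact hab h2
    · rw [h2] at ha; exact h01 (ha.symm.trans hb')
    · rw [← h2, h1] at hb; exact h01 (hb.symm.trans ha')
    · exact hab (σ.injective (h1.symm.trans h2))
  · intro e he
    simp at he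
    exact he.1
  · intro e he f hf hne v hv
    simp only [Finset.mem_sdiff, SimpleGraph.mem_edgeFinset] at he hf
    obtain ⟨⟨a, rfl⟩, ⟨b, rfl⟩⟩ := hv
    have hab : a ≠ b := fun h => hne (by rw [h])
    have hsub : ({a, b} : Set V) ⊆ G.neighborSet v := by
      rintro x (rfl | rfl)
      · exact he.1
      · exact hf.1
    have h2 : ({a, b} : Set V).ncard = 2 := Set.ncard_pair hab
    have hle := Set.ncard_le_ncard hsub (Set.toFinite _)
    have hdv := hdeg v
    have heq := Set.eq_of_subset_of_ncard_le hsub (by rw [h2]; exact hdv) (Set.toFinite _)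
    obtain ⟨x, hx, hxH⟩ := hcov v (by unfold fdeg at *; omega)
    have : x ∈ ({a, b} : Set V) := by rw [heq]; exact hx
    rcases this with rfl | rfl
    · exact he.2 hxH
    · exact hf.2 hxH
  · intro e he
    by_cases h : e ∈ H <;> simp_all

/-- if every connected component of `G` is a path or an even cycle
(equivalently, `G` is bipartite with maximum degree at most 2), then for every
`(H, H') ∈ M₂(G)` one has `H ∪ H' = E(G)`. -/
theorem stmt2 {V : Type*} [Fintype V] [DecidableEq V] (G : SimpleGraph V)
    (hbip : G.Colorable 2) (hdeg : ∀ v : V, fdeg G v ≤ 2)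
    (H H' : Finset (Sym2 V)) (h : InM2 G H H') :
    (↑H ∪ ↑H' : Set (Sym2 V)) = G.edgeSet := by
  classical
  obtain ⟨h1, h2, hdis, hlam, -⟩ := h
  obtain ⟨K, K', hK, hK', hKd, hKE⟩ := aux_two G hbip hdeg
  have hsub : ∀ {A B : Finset (Sym2 V)}, IsMatchingE G A → IsMatchingE G B →
      A ∪ B ⊆ G.edgeFinset := by
    intro A B hA hB e he
    rw [SimpleGraph.mem_edgeFinset]
    rcases Finset.mem_union.1 he with h | h
    · exact hA.1 h
    · exact hB.1 h
  have hle : K.card + K'.card ≤ gLam G := by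
    apply le_csSup
    · refine ⟨G.edgeFinset.card, ?_⟩
      rintro n ⟨A, B, hA, hB, hd, rfl⟩
      rw [← Finset.card_union_of_disjoint hd]
      exact Finset.card_le_card (hsub hA hB)
    · exact ⟨K, K', hK, hK', hKd, rfl⟩
  have hEq : H ∪ H' = G.edgeFinset := by
    apply Finset.eq_of_subset_of_card_le (hsub h1 h2)
    rw [Finset.card_union_of_disjoint hdis, hlam]
    refine le_trans (Finset.card_le_card (t := K ∪ K') fun e he => Finset.mem_union.2
      (hKE e (SimpleGraph.mem_edgeFinset.1 he))) ?_
    exact le_trans (Finset.card_union_le _ _) hle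
  rw [← Finset.coe_union, hEq, SimpleGraph.coe_edgeFinset]
end

section
/- Let G be a finite simple graph and (H, H') ∈ M₂(G). Then there is no path v₀, e₁, v₁, …, e₂ₖ₊₁, v₂ₖ₊₁ in G (k ≥ 0, all vertices distinct) such that the edges with odd index e₁, e₃, …, e₂ₖ₊₁ belong to H', the edges with even index belong to H, and neither of the end-vertices v₀ and v₂ₖ₊₁ is covered by H. (In other words, there is no maximal H-H' alternating path of odd length whose first and last edges are from H'.) -/
open SimpleGraph

/-- if `(H, H') ∈ M₂(G)` then there is no path
`v₀, e₁, v₁, …, e₂ₖ₊₁, v₂ₖ₊₁` whose odd-indexed edges are in `H'`, even-indexed edges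
are in `H`, and whose end-vertices are not covered by `H`. -/
theorem stmt4 {V : Type*} [Fintype V] [DecidableEq V] (G : SimpleGraph V)
    (H H' : Finset (Sym2 V)) (h : InM2 G H H') :
    ¬ ∃ (k : ℕ) (v : ℕ → V),
      (∀ i j, i ≤ 2 * k + 1 → j ≤ 2 * k + 1 → v i = v j → i = j) ∧
      (∀ i, i ≤ 2 * k → s(v i, v (i + 1)) ∈ (if i % 2 = 0 then H' else H)) ∧
      ¬ Covers H (v 0) ∧ ¬ Covers H (v (2 * k + 1)) := by
  classical
  rintro ⟨k, v, hinj, hpath, h0, h1⟩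
  obtain ⟨⟨hHG, hHm⟩, ⟨hHG', hHm'⟩, hdis, hlam, halp⟩ := h
  have ha : ∀ j, j < k + 1 → s(v (2 * j), v (2 * j + 1)) ∈ H' := by
    intro j hj
    have := hpath (2 * j) (by omega)
    rwa [if_pos (by omega)] at this
  have hb : ∀ j, j < k → s(v (2 * j + 1), v (2 * j + 2)) ∈ H := by
    intro j hj
    have := hpath (2 * j + 1) (by omega)
    rwa [if_neg (by omega)] at this
  obtain ⟨A, hA⟩ : ∃ A, A = (Finset.range (k + 1)).image (fun j => s(v (2 * j), v (2 * j + 1))) :=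
    ⟨_, rfl⟩
  obtain ⟨B, hB⟩ : ∃ B, B = (Finset.range k).image (fun j => s(v (2 * j + 1), v (2 * j + 2))) :=
    ⟨_, rfl⟩
  have cA : A.card = k + 1 := by
    rw [hA, Finset.card_image_of_injOn, Finset.card_range]
    intro i hi j hj hij
    simp only [Finset.coe_range, Set.mem_Iio] at hi hj
    simp only [Sym2.eq_iff] at hij
    rcases hij with ⟨h, -⟩ | ⟨h, -⟩
    · have := hinj _ _ (by omega) (by omega) h
      omega
    · have := hinj _ _ (by omega) (by omega) h
      omega
  have cB : B.card = k := by
    rw [hB, Finset.card_image_of_injOn, Finset.card_range]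
    intro i hi j hj hij
    simp only [Finset.coe_range, Set.mem_Iio] at hi hj
    simp only [Sym2.eq_iff] at hij
    rcases hij with ⟨h, -⟩ | ⟨h, -⟩
    · have := hinj _ _ (by omega) (by omega) h
      omega
    · have := hinj _ _ (by omega) (by omega) h
      omega
  have AH : A ⊆ H' := by
    intro e he
    simp only [hA, Finset.mem_image, Finset.mem_range] at he
    obtain ⟨j, hj, rfl⟩ := he
    exact ha j hj
  have BH : B ⊆ H := by
    intro e he
    simp only [hB, Finset.mem_image, Finset.mem_range] at he
    obtain ⟨j, hj, rfl⟩ := he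
    exact hb j hj
  -- vertices of the path
  have vA : ∀ i, i ≤ 2 * k + 1 → ∃ e ∈ A, v i ∈ e := by
    intro i hi
    rcases Nat.even_or_odd' i with ⟨j, rfl | rfl⟩
    · exact ⟨_, by rw [hA]; exact Finset.mem_image_of_mem _ (Finset.mem_range.2 (by omega : j < k + 1)),
        by simp⟩
    · exact ⟨_, by rw [hA]; exact Finset.mem_image_of_mem _ (Finset.mem_range.2 (by omega : j < k + 1)),
        by simp⟩
  have vB : ∀ i, 1 ≤ i → i ≤ 2 * k → ∃ e ∈ B, v i ∈ e := by
    intro i hi1 hi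
    rcases Nat.even_or_odd' i with ⟨j, rfl | rfl⟩
    · obtain ⟨j, rfl⟩ : ∃ m, j = m + 1 := ⟨j - 1, by omega⟩
      exact ⟨_, by rw [hB]; exact Finset.mem_image_of_mem _ (Finset.mem_range.2 (by omega : j < k)),
        by simp [mul_add]⟩
    · exact ⟨_, by rw [hB]; exact Finset.mem_image_of_mem _ (Finset.mem_range.2 (by omega : j < k)),
        by simp⟩
  have Av : ∀ e ∈ A, ∀ x ∈ e, ∃ i, i ≤ 2 * k + 1 ∧ x = v i := by
    intro e he x hx
    simp only [hA, Finset.mem_image, Finset.mem_range] at he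
    obtain ⟨j, hj, rfl⟩ := he
    rcases Sym2.mem_iff.1 hx with rfl | rfl
    · exact ⟨_, by omega, rfl⟩
    · exact ⟨_, by omega, rfl⟩
  have Bv : ∀ e ∈ B, ∀ x ∈ e, ∃ i, i ≤ 2 * k + 1 ∧ x = v i := by
    intro e he x hx
    simp only [hB, Finset.mem_image, Finset.mem_range] at he
    obtain ⟨j, hj, rfl⟩ := he
    rcases Sym2.mem_iff.1 hx with rfl | rfl
    · exact ⟨_, by omega, rfl⟩
    · exact ⟨_, by omega, rfl⟩
  -- no conflicts
  have c1 : ∀ e ∈ H \ B, ∀ f ∈ A, ∀ x, x ∈ e → x ∈ f → False := by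
    intro e he f hf x hxe hxf
    obtain ⟨heH, heB⟩ := Finset.mem_sdiff.1 he
    obtain ⟨i, hi, rfl⟩ := Av f hf x hxf
    by_cases hi0 : i = 0
    · subst hi0; exact h0 ⟨e, heH, hxe⟩
    by_cases hi1 : i = 2 * k + 1
    · subst hi1; exact h1 ⟨e, heH, hxe⟩
    obtain ⟨g, hg, hxg⟩ := vB i (by omega) (by omega)
    exact hHm e heH g (BH hg) (fun h => heB (h ▸ hg)) _ ⟨hxe, hxg⟩
  have c2 : ∀ e ∈ H' \ A, ∀ f ∈ B, ∀ x, x ∈ e → x ∈ f → False := by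
    intro e he f hf x hxe hxf
    obtain ⟨heH, heA⟩ := Finset.mem_sdiff.1 he
    obtain ⟨i, hi, rfl⟩ := Bv f hf x hxf
    obtain ⟨g, hg, hxg⟩ := vA i hi
    exact hHm' e heH g (AH hg) (fun h => heA (h ▸ hg)) _ ⟨hxe, hxg⟩
  have dHA : Disjoint (H \ B) A := (hdis.mono_left Finset.sdiff_subset).mono_right AH
  have dHB : Disjoint (H' \ A) B := (hdis.symm.mono_left Finset.sdiff_subset).mono_right BH
  have M1 : IsMatchingE G ((H \ B) ∪ A) := by
    refine ⟨?_, ?_⟩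
    · intro e he
      rcases Finset.mem_union.1 (Finset.mem_coe.1 he) with he | he
      · exact hHG (Finset.mem_coe.2 (Finset.mem_sdiff.1 he).1)
      · exact hHG' (Finset.mem_coe.2 (AH he))
    · rintro e he f hf hef x ⟨hxe, hxf⟩
      rcases Finset.mem_union.1 he with he | he <;> rcases Finset.mem_union.1 hf with hf | hf
      · exact hHm e (Finset.mem_sdiff.1 he).1 f (Finset.mem_sdiff.1 hf).1 hef x ⟨hxe, hxf⟩
      · exact c1 e he f hf x hxe hxf
      · exact c1 f hf e he x hxf hxe
      · exact hHm' e (AH he) f (AH hf) hef x ⟨hxe, hxf⟩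
  have M2 : IsMatchingE G ((H' \ A) ∪ B) := by
    refine ⟨?_, ?_⟩
    · intro e he
      rcases Finset.mem_union.1 (Finset.mem_coe.1 he) with he | he
      · exact hHG' (Finset.mem_coe.2 (Finset.mem_sdiff.1 he).1)
      · exact hHG (Finset.mem_coe.2 (BH he))
    · rintro e he f hf hef x ⟨hxe, hxf⟩
      rcases Finset.mem_union.1 he with he | he <;> rcases Finset.mem_union.1 hf with hf | hf
      · exact hHm' e (Finset.mem_sdiff.1 he).1 f (Finset.mem_sdiff.1 hf).1 hef x ⟨hxe, hxf⟩
      · exact c2 e he f hf x hxe hxf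
      · exact c2 f hf e he x hxf hxe
      · exact hHm e (BH he) f (BH hf) hef x ⟨hxe, hxf⟩
  have D : Disjoint ((H \ B) ∪ A) ((H' \ A) ∪ B) := by
    rw [Finset.disjoint_left] at hdis ⊢
    intro e he hf
    simp only [Finset.mem_union, Finset.mem_sdiff] at he hf
    have h1 := @AH e
    have h2 := @BH e
    have h3 := @hdis e
    tauto
  have k1 : ((H \ B) ∪ A).card + k = H.card + (k + 1) := by
    rw [Finset.card_union_of_disjoint dHA, cA]
    have := Finset.card_sdiff_add_card_eq_card BH
    omega
  have k2 : ((H' \ A) ∪ B).card + (k + 1) = H'.card + k := by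
    rw [Finset.card_union_of_disjoint dHB, cB]
    have := Finset.card_sdiff_add_card_eq_card AH
    omega
  have le : ((H \ B) ∪ A).card ≤ gAlpha G := by
    refine le_csSup ⟨Fintype.card (Sym2 V), ?_⟩ ⟨_, _, M1, M2, D, by omega, rfl⟩
    rintro n ⟨K, K', -, -, -, -, rfl⟩
    exact Finset.card_le_univ K
  omega
end

section
/- Let G be a finite simple graph, M a maximum matching of G, and (H, H') ∈ M₂(G, M). Let P : v₀, m₁, v₁, h₁, v₂, m₂, …, h_{l−1}, v_{2l−2}, m_l, v_{2l−1} be a path in G (all vertices distinct) whose edges alternately satisfy m_i ∈ M \ H and h_i ∈ H \ M, whose first and last edges m₁, m_l are from M \ H, and whose end-vertices v₀ and v_{2l−1} are not covered by H (so P is a maximal M-H alternating path of odd length starting and ending with edges of M). Then (1) m₁ ∈ H' and m_l ∈ H', and (2) l ≥ 3, i.e., the length of P is at least five. -/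
open SimpleGraph

theorem IsMatchingE.mono {V : Type*} {G : SimpleGraph V} {A B : Finset (Sym2 V)}
    (hA : IsMatchingE G A) (h : B ⊆ A) : IsMatchingE G B :=
  ⟨fun e he => hA.1 (h he), fun e he f hf => hA.2 e (h he) f (h hf)⟩

theorem IsMatchingE.insert_edge {V : Type*} [DecidableEq V] {G : SimpleGraph V}
    {B : Finset (Sym2 V)} (hB : IsMatchingE G B) {e : Sym2 V} (he : e ∈ G.edgeSet)
    (h : ∀ f ∈ B, ∀ v ∈ e, v ∉ f) : IsMatchingE G (insert e B) := by
  refine ⟨?_, ?_⟩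
  · intro f hf
    rcases Finset.mem_insert.1 (Finset.mem_coe.1 hf) with rfl | hf
    · exact he
    · exact hB.1 hf
  · intro f hf g hg hne v hv
    rcases Finset.mem_insert.1 hf with rfl | hf2 <;>
      rcases Finset.mem_insert.1 hg with rfl | hg2
    · exact hne rfl
    · exact h g hg2 v hv.1 hv.2
    · exact h f hf2 v hv.2 hv.1
    · exact hB.2 f hf2 g hg2 hne v hv

theorem IsMatchingE.eq_of_mem {V : Type*} {G : SimpleGraph V} {A : Finset (Sym2 V)}
    (hA : IsMatchingE G A) {e f : Sym2 V} (he : e ∈ A) (hf : f ∈ A) {v : V}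
    (h1 : v ∈ e) (h2 : v ∈ f) : e = f := by
  by_contra hne
  exact hA.2 e he f hf hne v ⟨h1, h2⟩

theorem le_gLam {V : Type*} [Fintype V] {G : SimpleGraph V} {K K' : Finset (Sym2 V)}
    (hK : IsMatchingE G K) (hK' : IsMatchingE G K') (hd : Disjoint K K') :
    K.card + K'.card ≤ gLam G := by
  classical
  refine le_csSup ⟨Fintype.card (Sym2 V) + Fintype.card (Sym2 V), ?_⟩
    ⟨K, K', hK, hK', hd, rfl⟩
  rintro n ⟨A, B, -, -, -, rfl⟩
  exact Nat.add_le_add (Finset.card_le_univ _) (Finset.card_le_univ _)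

theorem le_gAlpha {V : Type*} [Fintype V] {G : SimpleGraph V} {K K' : Finset (Sym2 V)}
    (hK : IsMatchingE G K) (hK' : IsMatchingE G K') (hd : Disjoint K K')
    (hs : K.card + K'.card = gLam G) : K.card ≤ gAlpha G := by
  classical
  refine le_csSup ⟨Fintype.card (Sym2 V), ?_⟩ ⟨K, K', hK, hK', hd, hs, rfl⟩
  rintro n ⟨A, B, -, -, -, -, rfl⟩
  exact Finset.card_le_univ _

/-- No edge of `G` outside `H` has both ends uncovered by `H`. -/
theorem no_free_edge {V : Type*} [Fintype V] [DecidableEq V] {G : SimpleGraph V}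
    {H H' : Finset (Sym2 V)} (h : InM2 G H H') {a b : V} (he : s(a, b) ∈ G.edgeSet)
    (ha : ¬ Covers H a) (hb : ¬ Covers H b) : False := by
  obtain ⟨mH, mH', hd, hs, hal⟩ := h
  have hn : s(a, b) ∉ H := fun hh => ha ⟨_, hh, Sym2.mem_mk_left _ _⟩
  have m1 : IsMatchingE G (insert s(a, b) H) := by
    refine mH.insert_edge he ?_
    intro f hf v hv hvf
    rcases Sym2.mem_iff.1 hv with rfl | rfl
    · exact ha ⟨f, hf, hvf⟩
    · exact hb ⟨f, hf, hvf⟩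
  have c1 : (insert s(a, b) H).card = H.card + 1 := Finset.card_insert_of_notMem hn
  by_cases hin : s(a, b) ∈ H'
  · have hdis : Disjoint (insert s(a, b) H) (H'.erase s(a, b)) := by
      rw [Finset.disjoint_left] at hd ⊢
      grind
    have m2 := mH'.mono (Finset.erase_subset s(a, b) H')
    have c2 := Finset.card_erase_add_one hin
    have := le_gAlpha m1 m2 hdis (by omega)
    omega
  · have hdis : Disjoint (insert s(a, b) H) H' := by
      rw [Finset.disjoint_left] at hd ⊢
      grind
    have := le_gLam m1 mH' hdis
    omega

/-- The first edge of the alternating path lies in the second matching of the pair. -/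
theorem end_edge_mem {V : Type*} [Fintype V] [DecidableEq V] {G : SimpleGraph V}
    {M H H' : Finset (Sym2 V)} (hM : IsMatchingE G M) (h : InM2M G M H H') {a b c : V}
    (hab : s(a, b) ∈ M \ H) (hbc : s(b, c) ∈ H \ M) (ha : ¬ Covers H a) :
    s(a, b) ∈ H' := by
  by_contra hin
  obtain ⟨⟨mH, mH', hd, hs, hal⟩, hmax⟩ := h
  rw [Finset.mem_sdiff] at hab hbc
  have m1 : IsMatchingE G (insert s(a, b) (H.erase s(b, c))) := by
    refine (mH.mono (Finset.erase_subset _ _)).insert_edge (hM.1 hab.1) ?_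
    intro f hf v hv hvf
    rw [Finset.mem_erase] at hf
    rcases Sym2.mem_iff.1 hv with rfl | rfl
    · exact ha ⟨f, hf.2, hvf⟩
    · exact hf.1 (mH.eq_of_mem hf.2 hbc.1 hvf (Sym2.mem_mk_left _ _))
  have c1 : (insert s(a, b) (H.erase s(b, c))).card = H.card := by
    rw [Finset.card_insert_of_notMem (fun hh => hab.2 (Finset.mem_of_mem_erase hh)),
      Finset.card_erase_add_one hbc.1]
  have hdis : Disjoint (insert s(a, b) (H.erase s(b, c))) H' := by
    rw [Finset.disjoint_left] at hd ⊢
    grind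
  have key := hmax _ _ ⟨m1, mH', hdis, by omega, by omega⟩
  have hlt : (M ∩ (H ∪ H')).card <
      (M ∩ (insert s(a, b) (H.erase s(b, c)) ∪ H')).card := by
    apply Finset.card_lt_card
    rw [Finset.ssubset_iff_of_subset]
    · exact ⟨s(a, b), by grind, by grind⟩
    · intro f hf
      have : f ≠ s(b, c) := by
        rintro rfl
        exact hbc.2 (Finset.mem_inter.1 hf).1
      grind
  omega

/-- The alternating path does not have length three. -/
theorem no_length_three {V : Type*} [Fintype V] [DecidableEq V] {G : SimpleGraph V}
    {H H' : Finset (Sym2 V)} (h : InM2 G H H') {a b c d : V}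
    (hab : s(a, b) ∈ H') (hbc : s(b, c) ∈ H) (hcd : s(c, d) ∈ H')
    (hne : s(a, b) ≠ s(c, d)) (ha : ¬ Covers H a) (hd' : ¬ Covers H d) : False := by
  obtain ⟨mH, mH', hd, hs, hal⟩ := h
  have hdl := Finset.disjoint_left.1 hd
  have n1 : s(a, b) ∉ H := fun hh => hdl hh hab
  have n2 : s(c, d) ∉ H := fun hh => hdl hh hcd
  have n3 : s(b, c) ∉ H' := hdl hbc
  have m1 : IsMatchingE G (insert s(a, b) (insert s(c, d) (H.erase s(b, c)))) := by
    refine ((mH.mono (Finset.erase_subset _ _)).insert_edge (mH'.1 hcd) ?_).insert_edge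
      (mH'.1 hab) ?_
    · intro f hf v hv hvf
      rw [Finset.mem_erase] at hf
      rcases Sym2.mem_iff.1 hv with rfl | rfl
      · exact hf.1 (mH.eq_of_mem hf.2 hbc hvf (Sym2.mem_mk_right _ _))
      · exact hd' ⟨f, hf.2, hvf⟩
    · intro f hf v hv hvf
      rcases Finset.mem_insert.1 hf with rfl | hf
      · exact hne (mH'.eq_of_mem hab hcd hv hvf)
      rw [Finset.mem_erase] at hf
      rcases Sym2.mem_iff.1 hv with rfl | rfl
      · exact ha ⟨f, hf.2, hvf⟩
      · exact hf.1 (mH.eq_of_mem hf.2 hbc hvf (Sym2.mem_mk_left _ _))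
  have m2 : IsMatchingE G (insert s(b, c) ((H'.erase s(a, b)).erase s(c, d))) := by
    refine ((mH'.mono (Finset.erase_subset _ _)).mono
      (Finset.erase_subset _ _)).insert_edge (mH.1 hbc) ?_
    intro f hf v hv hvf
    rw [Finset.mem_erase, Finset.mem_erase] at hf
    rcases Sym2.mem_iff.1 hv with rfl | rfl
    · exact hf.2.1 (mH'.eq_of_mem hf.2.2 hab hvf (Sym2.mem_mk_right _ _))
    · exact hf.1 (mH'.eq_of_mem hf.2.2 hcd hvf (Sym2.mem_mk_left _ _))
  have c1 : (insert s(a, b) (insert s(c, d) (H.erase s(b, c)))).card = H.card + 1 := by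
    rw [Finset.card_insert_of_notMem (by grind), Finset.card_insert_of_notMem (by grind),
      Finset.card_erase_add_one hbc]
  have c2 : (insert s(b, c) ((H'.erase s(a, b)).erase s(c, d))).card + 1 = H'.card := by
    rw [Finset.card_insert_of_notMem (by grind), Finset.card_erase_add_one (by grind),
      Finset.card_erase_add_one hab]
  have hdis : Disjoint (insert s(a, b) (insert s(c, d) (H.erase s(b, c))))
      (insert s(b, c) ((H'.erase s(a, b)).erase s(c, d))) := by
    rw [Finset.disjoint_left]
    grind
  have := le_gAlpha m1 m2 hdis (by omega)
  omega

/-- let `M` be a maximum matching, `(H, H') ∈ M₂(G, M)`, and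
`P : v₀, m₁, v₁, h₁, …, m_l, v₂ₗ₋₁` a maximal `M`-`H` alternating path of odd length
starting and ending with edges of `M \ H` whose end-vertices are not covered by `H`.
Then `m₁ ∈ H'`, `m_l ∈ H'`, and `l ≥ 3`. -/
theorem stmt5 {V : Type*} [Fintype V] [DecidableEq V] (G : SimpleGraph V)
    (M H H' : Finset (Sym2 V)) (hM : IsMatchingE G M) (hMmax : M.card = gBeta G)
    (hHH' : InM2M G M H H')
    (l : ℕ) (hl : 1 ≤ l) (v : ℕ → V)
    (hinj : ∀ i j, i < 2 * l → j < 2 * l → v i = v j → i = j)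
    (hedges : ∀ i, i < 2 * l - 1 →
      s(v i, v (i + 1)) ∈ (if i % 2 = 0 then M \ H else H \ M))
    (h0 : ¬ Covers H (v 0)) (h1 : ¬ Covers H (v (2 * l - 1))) :
    s(v 0, v 1) ∈ H' ∧ s(v (2 * l - 2), v (2 * l - 1)) ∈ H' ∧ 3 ≤ l := by
  have hl2 : 2 ≤ l := by
    by_contra hlt
    obtain rfl : l = 1 := by omega
    have e0 := hedges 0 (by omega)
    simp only [Nat.zero_mod, if_true, zero_add] at e0
    exact no_free_edge hHH'.1 (hM.1 (Finset.mem_sdiff.1 e0).1) h0 h1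
  obtain ⟨k, rfl⟩ : ∃ k, l = k + 2 := ⟨l - 2, by omega⟩
  have e0 := hedges 0 (by omega)
  have e1 := hedges 1 (by omega)
  have e2 := hedges (2 * k + 1) (by omega)
  have e3 := hedges (2 * k + 2) (by omega)
  rw [if_pos (by omega)] at e0 e3
  rw [if_neg (by omega)] at e1 e2
  have i1 : 2 * (k + 2) - 1 = 2 * k + 3 := by omega
  have i2 : 2 * (k + 2) - 2 = 2 * k + 2 := by omega
  rw [i1] at h1
  rw [i1, i2]
  have f1 : s(v 0, v 1) ∈ H' := end_edge_mem hM hHH' e0 e1 h0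
  have f2 : s(v (2 * k + 2), v (2 * k + 3)) ∈ H' := by
    have := end_edge_mem (a := v (2 * k + 3)) (b := v (2 * k + 2)) (c := v (2 * k + 1))
      hM hHH' (by rw [Sym2.eq_swap]; exact e3) (by rw [Sym2.eq_swap]; exact e2) h1
    rw [Sym2.eq_swap]
    exact this
  refine ⟨f1, f2, ?_⟩
  by_contra hk
  obtain rfl : k = 0 := by omega
  refine no_length_three hHH'.1 f1 (Finset.mem_sdiff.1 e1).1 f2 ?_ h0 h1
  intro heq
  have hmem : v 0 ∈ s(v 2, v 3) := heq ▸ Sym2.mem_mk_left (v 0) (v 1)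
  rcases Sym2.mem_iff.1 hmem with hh | hh
  · have := hinj 0 2 (by omega) (by omega) hh
    omega
  · have := hinj 0 3 (by omega) (by omega) hh
    omega
end

section
/- Let G be a finite simple graph, M a maximum matching of G, and (H, H') ∈ M₂(G, M). Let P be a path in G whose edges alternately belong to M \ H and H \ M, whose first and last edges belong to M \ H, and whose two end-vertices are not covered by H (a maximal M-H alternating path of odd length starting and ending with edges of M). Then every vertex lying on P is covered by H', i.e., is incident to an edge of H'. -/
open SimpleGraph

/-- Key exchange: a vertex `w` on an edge of `M \ H` is covered by `H'`. -/
lemma covers_of_edge {V : Type*} [Fintype V] [DecidableEq V] (G : SimpleGraph V)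
    (M H H' : Finset (Sym2 V)) (hM : IsMatchingE G M) (hHH' : InM2M G M H H')
    (w u : V) (hm : s(w, u) ∈ M) (hmH : s(w, u) ∉ H) : Covers H' w := by
  classical
  by_contra hw
  obtain ⟨⟨hH, hH', hd, hlam, halpha⟩, hmax⟩ := hHH'
  have hw' : ∀ e ∈ H', w ∉ e := fun e he hwe => hw ⟨e, he, hwe⟩
  have hmH' : s(w, u) ∉ H' := fun h => hw' _ h (Sym2.mem_mk_left w u)
  -- inserting the edge into a subset of `H'` avoiding `u` gives a matching
  have key : ∀ T : Finset (Sym2 V), T ⊆ H' → (∀ e ∈ T, u ∉ e) →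
      IsMatchingE G (insert s(w, u) T) ∧ Disjoint H (insert s(w, u) T) := by
    intro T hT hu
    have hno : ∀ e ∈ T, ∀ x, ¬ (x ∈ s(w, u) ∧ x ∈ e) := by
      rintro e he x ⟨hx, hxe⟩
      rcases Sym2.mem_iff.1 hx with rfl | rfl
      · exact hw' e (hT he) hxe
      · exact hu e he hxe
    refine ⟨⟨?_, ?_⟩, ?_⟩
    · intro e he
      rcases Finset.mem_insert.1 (Finset.mem_coe.1 he) with rfl | he
      · exact hM.1 (Finset.mem_coe.2 hm)
      · exact hH'.1 (Finset.mem_coe.2 (hT he))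
    · intro e he f hf hne x hx
      rcases Finset.mem_insert.1 he with rfl | he <;>
        rcases Finset.mem_insert.1 hf with rfl | hf
      · exact hne rfl
      · exact hno f hf x hx
      · exact hno e he x hx.symm
      · exact hH'.2 e (hT he) f (hT hf) hne x hx
    · rw [Finset.disjoint_insert_right]
      exact ⟨hmH, hd.mono_right hT⟩
  by_cases hu : ∃ f ∈ H', u ∈ f
  · obtain ⟨f, hf, huf⟩ := hu
    have hfM : f ∉ M := by
      intro h
      by_cases hfe : f = s(w, u)
      · exact hmH' (hfe ▸ hf)
      · exact hM.2 f h _ hm hfe u ⟨huf, Sym2.mem_mk_right w u⟩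
    obtain ⟨k1, k2⟩ := key (H'.erase f) (Finset.erase_subset _ _) (by
      intro e he hue
      obtain ⟨hne, he⟩ := Finset.mem_erase.1 he
      exact hH'.2 e he f hf hne u ⟨hue, huf⟩)
    have hcard : (insert s(w, u) (H'.erase f)).card = H'.card := by
      rw [Finset.card_insert_of_notMem (fun h => hmH' (Finset.mem_of_mem_erase h)),
        Finset.card_erase_add_one hf]
    have h := hmax H _ ⟨hH, k1, k2, by rw [hcard, hlam], halpha⟩
    refine absurd h (not_le.2 (Finset.card_lt_card ?_))
    rw [Finset.ssubset_iff]
    refine ⟨s(w, u), by simp [hmH, hmH'], ?_⟩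
    intro e he
    have : e ∈ M → e ≠ f := fun h1 h2 => hfM (h2 ▸ h1)
    simp only [Finset.mem_insert, Finset.mem_inter, Finset.mem_union, Finset.mem_erase] at he ⊢
    rcases he with rfl | he
    · exact ⟨hm, Or.inr (Or.inl rfl)⟩
    · tauto
  · push Not at hu
    obtain ⟨k1, k2⟩ := key H' subset_rfl hu
    have hb : BddAbove {n | ∃ H H' : Finset (Sym2 V), IsMatchingE G H ∧ IsMatchingE G H' ∧
        Disjoint H H' ∧ H.card + H'.card = n} := by
      refine ⟨Fintype.card (Sym2 V) + Fintype.card (Sym2 V), ?_⟩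
      rintro n ⟨A, B, -, -, -, rfl⟩
      exact add_le_add A.card_le_univ B.card_le_univ
    have h : H.card + (insert s(w, u) H').card ≤ gLam G := le_csSup hb ⟨H, _, hH, k1, k2, rfl⟩
    rw [Finset.card_insert_of_notMem hmH'] at h
    omega

/-- let `M` be a maximum matching, `(H, H') ∈ M₂(G, M)`, and `P` a maximal
`M`-`H` alternating path of odd length starting and ending with edges of `M \ H` whose
end-vertices are not covered by `H`. Then every vertex of `P` is covered by `H'`. -/
theorem stmt6 {V : Type*} [Fintype V] [DecidableEq V] (G : SimpleGraph V)
    (M H H' : Finset (Sym2 V)) (hM : IsMatchingE G M) (hMmax : M.card = gBeta G)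
    (hHH' : InM2M G M H H')
    (l : ℕ) (hl : 1 ≤ l) (v : ℕ → V)
    (hinj : ∀ i j, i < 2 * l → j < 2 * l → v i = v j → i = j)
    (hedges : ∀ i, i < 2 * l - 1 →
      s(v i, v (i + 1)) ∈ (if i % 2 = 0 then M \ H else H \ M))
    (h0 : ¬ Covers H (v 0)) (h1 : ¬ Covers H (v (2 * l - 1))) :
    ∀ i, i < 2 * l → Covers H' (v i) := by
  intro i hi
  rcases Nat.mod_two_eq_zero_or_one i with h | h
  · have he := hedges i (by omega)
    rw [if_pos h, Finset.mem_sdiff] at he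
    exact covers_of_edge G M H H' hM hHH' _ _ he.1 he.2
  · obtain ⟨j, rfl⟩ : ∃ j, i = j + 1 := ⟨i - 1, by omega⟩
    have he := hedges j (by omega)
    rw [if_pos (by omega), Finset.mem_sdiff, Sym2.eq_swap] at he
    exact covers_of_edge G M H H' hM hHH' _ _ he.1 he.2
end

section
/- For the spanner S one has β(S) = 5, λ(S) = 8, and α(S) = λ(S) − α(S) = 4; in particular β(S)/α(S) = 5/4. -/
open SimpleGraph

/-- Indicator of membership of an edge. -/
def spInd (M : Finset (Sym2 (Fin 10))) (e : Sym2 (Fin 10)) : ℕ := if e ∈ M then 1 else 0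

/-- The edges of the spanner as a finset. -/
def spEdges : Finset (Sym2 (Fin 10)) :=
  {s(0, 1), s(1, 2), s(2, 3), s(3, 4), s(5, 6), s(6, 7), s(7, 8), s(8, 9), s(2, 7)}

lemma sp_edgeSet : Spanner10.edgeSet = (↑spEdges : Set (Sym2 (Fin 10))) := by
  have h : ∀ e ∈ spEdges, ¬ e.IsDiag := by decide
  rw [Spanner10, SimpleGraph.edgeSet_fromEdgeSet]
  ext e
  constructor
  · rintro ⟨h1, -⟩
    simpa [spEdges] using h1
  · intro he
    exact ⟨by simpa [spEdges] using he, h e he⟩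

lemma sp_card {M : Finset (Sym2 (Fin 10))} (hM : IsMatchingE Spanner10 M) :
    M.card = spInd M s(0, 1) + spInd M s(1, 2) + spInd M s(2, 3) + spInd M s(3, 4)
      + spInd M s(5, 6) + spInd M s(6, 7) + spInd M s(7, 8) + spInd M s(8, 9)
      + spInd M s(2, 7) := by
  have h1 : M ⊆ spEdges := by
    have := hM.1
    rw [sp_edgeSet] at this
    exact_mod_cast this
  have h2 : M.card = ∑ e ∈ spEdges, spInd M e := by
    unfold spInd
    rw [← Finset.card_filter, Finset.filter_mem_eq_inter, Finset.inter_eq_right.2 h1]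
  rw [h2]
  unfold spEdges
  repeat rw [Finset.sum_insert (by decide)]
  rw [Finset.sum_singleton]
  ring

lemma sp_adj {M : Finset (Sym2 (Fin 10))} (hM : IsMatchingE Spanner10 M)
    (u v w : Fin 10) (h : u ≠ w) : spInd M s(u, v) + spInd M s(v, w) ≤ 1 := by
  unfold spInd
  split_ifs with h1 h2 <;> try omega
  exfalso
  refine hM.2 _ h1 _ h2 ?_ v (by simp)
  intro h3
  rw [Sym2.eq_swap, Sym2.congr_right] at h3
  exact h h3

lemma sp_disj {H H' : Finset (Sym2 (Fin 10))} (h : Disjoint H H') (e : Sym2 (Fin 10)) :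
    spInd H e + spInd H' e ≤ 1 := by
  unfold spInd
  split_ifs with h1 h2 <;> try omega
  exact absurd h2 (Finset.disjoint_left.1 h h1)

/-- The adjacency constraints, and the upper bound on each matching. -/
lemma sp_cons {M : Finset (Sym2 (Fin 10))} (hM : IsMatchingE Spanner10 M) :
    spInd M s(0, 1) + spInd M s(1, 2) ≤ 1 ∧ spInd M s(2, 3) + spInd M s(3, 4) ≤ 1 ∧
    spInd M s(5, 6) + spInd M s(6, 7) ≤ 1 ∧ spInd M s(7, 8) + spInd M s(8, 9) ≤ 1 ∧
    spInd M s(1, 2) + spInd M s(2, 3) ≤ 1 ∧ spInd M s(6, 7) + spInd M s(7, 8) ≤ 1 ∧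
    spInd M s(1, 2) + spInd M s(2, 7) ≤ 1 ∧ spInd M s(2, 3) + spInd M s(2, 7) ≤ 1 ∧
    spInd M s(6, 7) + spInd M s(2, 7) ≤ 1 ∧ spInd M s(7, 8) + spInd M s(2, 7) ≤ 1 := by
  have a1 := sp_adj hM 3 2 7 (by decide)
  have a2 := sp_adj hM 6 7 2 (by decide)
  have a3 := sp_adj hM 8 7 2 (by decide)
  rw [Sym2.eq_swap (a := 3)] at a1
  rw [Sym2.eq_swap (a := 7) (b := 2)] at a2 a3
  rw [Sym2.eq_swap (a := 8)] at a3
  exact ⟨sp_adj hM _ _ _ (by decide), sp_adj hM _ _ _ (by decide),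
    sp_adj hM _ _ _ (by decide), sp_adj hM _ _ _ (by decide),
    sp_adj hM _ _ _ (by decide), sp_adj hM _ _ _ (by decide),
    sp_adj hM _ _ _ (by decide), a1, a2, a3⟩

lemma sp_le5 {M : Finset (Sym2 (Fin 10))} (hM : IsMatchingE Spanner10 M) : M.card ≤ 5 := by
  have := sp_cons hM
  have := sp_card hM
  omega

lemma sp_ind (M : Finset (Sym2 (Fin 10))) (e : Sym2 (Fin 10)) :
    spInd M e = 0 ∨ spInd M e = 1 := by
  unfold spInd
  split_ifs <;> simp

/-- The constraints at the two vertices of degree three. -/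
lemma sp_tri {M : Finset (Sym2 (Fin 10))} (hM : IsMatchingE Spanner10 M) :
    spInd M s(1, 2) + spInd M s(2, 3) + spInd M s(2, 7) ≤ 1 ∧
    spInd M s(6, 7) + spInd M s(7, 8) + spInd M s(2, 7) ≤ 1 := by
  obtain ⟨-, -, -, -, h1, h2, h3, h4, h5, h6⟩ := sp_cons hM
  rcases sp_ind M s(2, 7) with h | h <;> omega

lemma sp_pair {H H' : Finset (Sym2 (Fin 10))} (hH : IsMatchingE Spanner10 H)
    (hH' : IsMatchingE Spanner10 H') (hd : Disjoint H H') :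
    H.card + H'.card ≤ 8 ∧ (H.card + H'.card = 8 → H.card ≤ 4) := by
  have c1 := sp_cons hH
  have c2 := sp_cons hH'
  have k1 := sp_card hH
  have k2 := sp_card hH'
  have d1 := sp_disj hd s(0, 1)
  have d2 := sp_disj hd s(3, 4)
  have d3 := sp_disj hd s(5, 6)
  have d4 := sp_disj hd s(8, 9)
  have d5 := sp_disj hd s(2, 7)
  obtain ⟨p1, p2, p3, p4, p5, p6, p7, p8, p9, p10⟩ := c1
  obtain ⟨q1, q2, q3, q4, q5, q6, q7, q8, q9, q10⟩ := c2
  have v1 := sp_tri hH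
  have v2 := sp_tri hH'
  obtain ⟨r1, r2⟩ := v1
  obtain ⟨t1, t2⟩ := v2
  rw [k1, k2]
  clear k1 k2
  generalize spInd H s(0, 1) = x1 at *
  generalize spInd H s(1, 2) = x2 at *
  generalize spInd H s(2, 3) = x3 at *
  generalize spInd H s(3, 4) = x4 at *
  generalize spInd H s(5, 6) = x5 at *
  generalize spInd H s(6, 7) = x6 at *
  generalize spInd H s(7, 8) = x7 at *
  generalize spInd H s(8, 9) = x8 at *
  generalize spInd H s(2, 7) = x9 at *
  constructor
  · linarith
  · intro h
    by_contra! h5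
    have e1 : x9 = 1 := by linarith
    linarith

lemma sp_isMatching {M : Finset (Sym2 (Fin 10))} (h1 : M ⊆ spEdges)
    (h2 : ∀ e ∈ M, ∀ f ∈ M, e ≠ f → ∀ v : Fin 10, ¬(v ∈ e ∧ v ∈ f)) :
    IsMatchingE Spanner10 M := by
  refine ⟨?_, h2⟩
  rw [sp_edgeSet]
  exact_mod_cast h1

lemma sp_sSup {S : Set ℕ} {k : ℕ} (h1 : k ∈ S) (h2 : ∀ n ∈ S, n ≤ k) : sSup S = k :=
  IsGreatest.csSup_eq ⟨h1, h2⟩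

set_option maxRecDepth 100000 in
lemma sp_m0 : IsMatchingE Spanner10 {s(0, 1), s(3, 4), s(5, 6), s(8, 9), s(2, 7)} :=
  sp_isMatching (by decide) (by decide)

set_option maxRecDepth 100000 in
lemma sp_m1 : IsMatchingE Spanner10 {s(0, 1), s(2, 3), s(5, 6), s(7, 8)} :=
  sp_isMatching (by decide) (by decide)

set_option maxRecDepth 100000 in
lemma sp_m2 : IsMatchingE Spanner10 {s(1, 2), s(3, 4), s(6, 7), s(8, 9)} :=
  sp_isMatching (by decide) (by decide)

lemma sp_dj : Disjoint ({s(0, 1), s(2, 3), s(5, 6), s(7, 8)} : Finset (Sym2 (Fin 10)))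
    {s(1, 2), s(3, 4), s(6, 7), s(8, 9)} := by
  rw [Finset.disjoint_left]
  decide

/-- for the spanner `S`: `β(S) = 5`, `λ(S) = 8`, and
`α(S) = λ(S) − α(S) = 4`; in particular `β(S)/α(S) = 5/4`. -/
theorem stmt7 :
    gBeta Spanner10 = 5 ∧ gLam Spanner10 = 8 ∧ gAlpha Spanner10 = 4 ∧
    gLam Spanner10 - gAlpha Spanner10 = 4 ∧
    4 * gBeta Spanner10 = 5 * gAlpha Spanner10 := by
  have hb : gBeta Spanner10 = 5 := by
    refine sp_sSup ⟨_, sp_m0, by decide⟩ ?_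
    rintro n ⟨M, hM, rfl⟩
    exact sp_le5 hM
  have hl : gLam Spanner10 = 8 := by
    refine sp_sSup (k := 8) ⟨_, _, sp_m1, sp_m2, sp_dj, by decide⟩ ?_
    rintro n ⟨H, H', h, h', hd, rfl⟩
    exact (sp_pair h h' hd).1
  have ha : gAlpha Spanner10 = 4 := by
    unfold gAlpha
    rw [hl]
    refine sp_sSup (k := 4) ⟨_, _, sp_m1, sp_m2, sp_dj, by decide, by decide⟩ ?_
    rintro n ⟨H, H', h, h', hd, hs, rfl⟩
    exact (sp_pair h h' hd).2 hs
  rw [hb, hl, ha]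
  decide
end

section
/- Let S be the spanner and v a vertex of S of degree 1. Then there exists a pair (H, H') ∈ M₂(S) such that v is not covered by H, and there exists a pair (H, H') ∈ M₂(S) such that v is not covered by H'. -/
open SimpleGraph

/-- The edge set of the spanner as a finset. -/
def spE : Finset (Sym2 (Fin 10)) :=
  {s(0, 1), s(1, 2), s(2, 3), s(3, 4), s(5, 6), s(6, 7), s(7, 8), s(8, 9), s(2, 7)}

lemma spE_edgeSet : Spanner10.edgeSet = ↑spE := by
  have h : ∀ e ∈ spE, ¬ e.IsDiag := by decide
  unfold Spanner10
  rw [SimpleGraph.edgeSet_fromEdgeSet]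
  ext e
  constructor
  · rintro ⟨he, -⟩
    simpa [spE] using he
  · intro he
    exact ⟨by simpa [spE] using he, h e he⟩

/-- Indicator of an edge in a finite set of edges. -/
def ind (M : Finset (Sym2 (Fin 10))) (e : Sym2 (Fin 10)) : ℕ := if e ∈ M then 1 else 0

lemma ind_card {M : Finset (Sym2 (Fin 10))} (h : IsMatchingE Spanner10 M) :
    M.card = ind M s(0, 1) + ind M s(1, 2) + ind M s(2, 3) + ind M s(3, 4) + ind M s(5, 6)
      + ind M s(6, 7) + ind M s(7, 8) + ind M s(8, 9) + ind M s(2, 7) := by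
  have hs : M ⊆ spE := by
    have := h.1
    rw [spE_edgeSet] at this
    exact_mod_cast this
  have h1 : M.card = ∑ e ∈ spE, ind M e := by
    unfold ind
    rw [← Finset.card_filter, Finset.filter_mem_eq_inter, Finset.inter_eq_right.mpr hs]
  rw [h1]
  have h2 : ∑ e ∈ spE, ind M e = (([s(0, 1), s(1, 2), s(2, 3), s(3, 4), s(5, 6), s(6, 7), s(7, 8),
      s(8, 9), s(2, 7)] : List (Sym2 (Fin 10))).map (ind M)).sum := by
    rw [← List.sum_toFinset _ (by decide)]
    rfl
  rw [h2]
  simp only [List.map_cons, List.map_nil, List.sum_cons, List.sum_nil]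
  omega

lemma ind_pair {M : Finset (Sym2 (Fin 10))} (h : IsMatchingE Spanner10 M)
    (e f : Sym2 (Fin 10)) (v : Fin 10) (hef : e ≠ f) (he : v ∈ e) (hf : v ∈ f) :
    ind M e + ind M f ≤ 1 := by
  unfold ind
  by_cases h1 : e ∈ M <;> by_cases h2 : f ∈ M <;> simp [h1, h2]
  exact h.2 e h1 f h2 hef v ⟨he, hf⟩

lemma ind_disj {M N : Finset (Sym2 (Fin 10))} (h : Disjoint M N) (e : Sym2 (Fin 10)) :
    ind M e + ind N e ≤ 1 := by
  unfold ind
  by_cases h1 : e ∈ M <;> by_cases h2 : e ∈ N <;> simp [h1, h2]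
  exact Finset.disjoint_left.mp h h1 h2

lemma ind_star {M : Finset (Sym2 (Fin 10))} (h : IsMatchingE Spanner10 M) :
    ind M s(1, 2) + ind M s(2, 3) + ind M s(2, 7) ≤ 1 ∧
    ind M s(6, 7) + ind M s(7, 8) + ind M s(2, 7) ≤ 1 ∧
    ind M s(0, 1) + ind M s(1, 2) ≤ 1 ∧ ind M s(2, 3) + ind M s(3, 4) ≤ 1 ∧
    ind M s(5, 6) + ind M s(6, 7) ≤ 1 ∧ ind M s(7, 8) + ind M s(8, 9) ≤ 1 := by
  have a1 := ind_pair h s(1, 2) s(2, 3) 2 (by decide) (by decide) (by decide)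
  have a2 := ind_pair h s(1, 2) s(2, 7) 2 (by decide) (by decide) (by decide)
  have a3 := ind_pair h s(2, 3) s(2, 7) 2 (by decide) (by decide) (by decide)
  have b1 := ind_pair h s(6, 7) s(7, 8) 7 (by decide) (by decide) (by decide)
  have b2 := ind_pair h s(6, 7) s(2, 7) 7 (by decide) (by decide) (by decide)
  have b3 := ind_pair h s(7, 8) s(2, 7) 7 (by decide) (by decide) (by decide)
  exact ⟨by omega, by omega,
    ind_pair h _ _ 1 (by decide) (by decide) (by decide),
    ind_pair h _ _ 3 (by decide) (by decide) (by decide),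
    ind_pair h _ _ 6 (by decide) (by decide) (by decide),
    ind_pair h _ _ 8 (by decide) (by decide) (by decide)⟩

lemma pair_bound {H K : Finset (Sym2 (Fin 10))} (hH : IsMatchingE Spanner10 H)
    (hK : IsMatchingE Spanner10 K) (hd : Disjoint H K) :
    H.card + K.card ≤ 8 ∧ (H.card + K.card = 8 → H.card ≤ 4) := by
  have c1 := ind_card hH
  have c2 := ind_card hK
  obtain ⟨p1, p2, p3, p4, p5, p6⟩ := ind_star hH
  obtain ⟨q1, q2, q3, q4, q5, q6⟩ := ind_star hK
  have d1 := ind_disj hd s(0, 1)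
  have d2 := ind_disj hd s(3, 4)
  have d3 := ind_disj hd s(5, 6)
  have d4 := ind_disj hd s(8, 9)
  have e1 : H.card + K.card + (ind H s(2, 7) + ind K s(2, 7)) ≤ 8 := by linarith
  refine ⟨by linarith, fun h8 => ?_⟩
  have e2 : ind H s(2, 7) = 0 := by
    have : ind H s(2, 7) + ind K s(2, 7) ≤ 0 := by linarith
    exact (Nat.add_eq_zero_iff.mp (Nat.le_zero.mp this)).1
  linarith

/-- One half of the alternating decomposition. -/
def spA : Finset (Sym2 (Fin 10)) := {s(0, 1), s(2, 3), s(5, 6), s(7, 8)}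
/-- The other half. -/
def spB : Finset (Sym2 (Fin 10)) := {s(1, 2), s(3, 4), s(6, 7), s(8, 9)}

set_option maxRecDepth 20000 in
lemma spA_match : IsMatchingE Spanner10 spA := by
  refine ⟨?_, by decide⟩
  rw [spE_edgeSet]
  have : spA ⊆ spE := by decide
  exact_mod_cast this

set_option maxRecDepth 20000 in
lemma spB_match : IsMatchingE Spanner10 spB := by
  refine ⟨?_, by decide⟩
  rw [spE_edgeSet]
  have : spB ⊆ spE := by decide
  exact_mod_cast this

set_option maxRecDepth 20000 in
lemma spAB_disj : Disjoint spA spB := by decide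

lemma gLam_spanner : gLam Spanner10 = 8 := by
  apply IsGreatest.csSup_eq
  refine ⟨⟨spA, spB, spA_match, spB_match, spAB_disj, by decide⟩, ?_⟩
  rintro n ⟨H, K, hH, hK, hd, rfl⟩
  exact (pair_bound hH hK hd).1

lemma gAlpha_spanner : gAlpha Spanner10 = 4 := by
  apply IsGreatest.csSup_eq
  refine ⟨⟨spA, spB, spA_match, spB_match, spAB_disj, by rw [gLam_spanner]; decide,
    by decide⟩, ?_⟩
  rintro n ⟨H, K, hH, hK, hd, h8, rfl⟩
  rw [gLam_spanner] at h8
  exact (pair_bound hH hK hd).2 h8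

lemma spAB_M2 : InM2 Spanner10 spA spB :=
  ⟨spA_match, spB_match, spAB_disj, by rw [gLam_spanner]; decide, by rw [gAlpha_spanner]; decide⟩

lemma spBA_M2 : InM2 Spanner10 spB spA :=
  ⟨spB_match, spA_match, spAB_disj.symm, by rw [gLam_spanner]; decide,
    by rw [gAlpha_spanner]; decide⟩

/-- A vertex with two distinct neighbours does not have degree 1. -/
lemma not_deg_one (v a b : Fin 10) (hab : a ≠ b) (ha : s(v, a) ∈ spE) (hb : s(v, b) ∈ spE) :
    fdeg Spanner10 v ≠ 1 := by
  intro h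
  obtain ⟨c, hc⟩ := Set.ncard_eq_one.mp h
  have key : ∀ x, s(v, x) ∈ spE → x = c := by
    intro x hx
    have h1 : s(v, x) ∈ Spanner10.edgeSet := by
      rw [spE_edgeSet]
      exact hx
    have h2 : x ∈ Spanner10.neighborSet v := h1
    rw [hc] at h2
    exact h2
  exact hab ((key a ha).trans (key b hb).symm)

set_option maxRecDepth 20000 in
lemma uncovered_or (v : Fin 10) (hv : fdeg Spanner10 v = 1) :
    ¬ Covers spA v ∨ ¬ Covers spB v := by
  have h : ∀ v : Fin 10, (∃ a b, a ≠ b ∧ s(v, a) ∈ spE ∧ s(v, b) ∈ spE) ∨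
      (¬ ∃ e ∈ spA, v ∈ e) ∨ (¬ ∃ e ∈ spB, v ∈ e) := by decide
  rcases h v with ⟨a, b, hab, ha, hb⟩ | h
  · exact absurd hv (not_deg_one v a b hab ha hb)
  · exact h

/-- for every vertex `v` of degree 1 of the spanner `S` there is a pair
`(H, H') ∈ M₂(S)` with `v` not covered by `H`, and a pair with `v` not covered by `H'`. -/
theorem stmt9 (v : Fin 10) (hv : fdeg Spanner10 v = 1) :
    (∃ H H' : Finset (Sym2 (Fin 10)), InM2 Spanner10 H H' ∧ ¬ Covers H v) ∧
    (∃ H H' : Finset (Sym2 (Fin 10)), InM2 Spanner10 H H' ∧ ¬ Covers H' v) := by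
  rcases uncovered_or v hv with h | h
  · exact ⟨⟨spA, spB, spAB_M2, h⟩, ⟨spB, spA, spBA_M2, h⟩⟩
  · exact ⟨⟨spB, spA, spBA_M2, h⟩, ⟨spA, spB, spAB_M2, h⟩⟩
end
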